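/- Let H be a separable complex Hilbert space and let p and q be orthogonal projections on H. Then the operator q p (1 - q) is Hilbert–Schmidt if and only if there exist an orthogonal projection e on H commuting with q p q and a trace-class operator t on H such that q p q = e + t. -/

import Mathlib

open scoped InnerProductSpace

/-- An orthogonal projection on a complex Hilbert space: a bounded operator `e`
with `e = e*` and `e = e²`. -/
def IsOrthogonalProjection {H : Type*} [NormedAddCommGroup H] [InnerProductSpace ℂ H]
    [CompleteSpace H] (e : H →L[ℂ] H) : Prop :=
  IsSelfAdjoint e ∧ e * e = e

/-- A bounded operator `T` on a Hilbert space is Hilbert–Schmidt if for some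
Hilbert (orthonormal) basis `(eᵢ)` the sum `Σᵢ ‖T eᵢ‖²` is finite. -/
def IsHilbertSchmidt {H : Type*} [NormedAddCommGroup H] [InnerProductSpace ℂ H]
    [CompleteSpace H] (T : H →L[ℂ] H) : Prop :=
  ∃ (ι : Type) (b : HilbertBasis ι ℂ H), Summable fun i => ‖T (b i)‖ ^ 2

/-- A bounded operator `T` on a Hilbert space is trace class if for some Hilbert
(orthonormal) basis `(eᵢ)` the sum `Σᵢ ⟨eᵢ, √(T*T) eᵢ⟩` is finite. -/
def IsTraceClass {H : Type*} [NormedAddCommGroup H] [InnerProductSpace ℂ H]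
    [CompleteSpace H] (T : H →L[ℂ] H) : Prop :=
  ∃ (ι : Type) (b : HilbertBasis ι ℂ H),
    Summable fun i => (⟪b i, (CFC.sqrt (star T * T)) (b i)⟫_ℂ).re

section Helpers

variable {H : Type*} [NormedAddCommGroup H] [InnerProductSpace ℂ H] [CompleteSpace H]

/-- Parseval. -/
lemma aux_hasSum_norm_sq {ι : Type} (b : HilbertBasis ι ℂ H) (x : H) :
    HasSum (fun j => ‖⟪b j, x⟫_ℂ‖ ^ 2) (‖x‖ ^ 2) := by
  have h := b.hasSum_inner_mul_inner x x
  have h2 := Complex.hasSum_re h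
  have e2 : (⟪x, x⟫_ℂ).re = ‖x‖ ^ 2 := by
    rw [inner_self_eq_norm_sq_to_K]; norm_cast
  rw [e2] at h2
  convert h2 using 2 with j
  rw [← inner_conj_symm x (b j), ← Complex.normSq_eq_conj_mul_self, Complex.normSq_eq_norm_sq]
  norm_cast

/-- The Hilbert-Schmidt sum is invariant under adjoint. -/
lemma aux_summable_star {ι : Type} (b : HilbertBasis ι ℂ H) (T : H →L[ℂ] H)
    (h : Summable fun i => ‖T (b i)‖ ^ 2) : Summable fun i => ‖(star T) (b i)‖ ^ 2 := by
  have h1 : Summable fun z : ι × ι => ‖⟪b z.2, T (b z.1)⟫_ℂ‖ ^ 2 := by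
    rw [summable_prod_of_nonneg (fun _ => by positivity)]
    refine ⟨fun i => (aux_hasSum_norm_sq b (T (b i))).summable, ?_⟩
    simpa only [(aux_hasSum_norm_sq b (T (b _))).tsum_eq] using h
  have h2 := h1.prod_symm
  rw [summable_prod_of_nonneg (fun _ => by positivity)] at h2
  have h3 := h2.2
  refine h3.congr fun j => ?_
  rw [← (aux_hasSum_norm_sq b ((star T) (b j))).tsum_eq]
  refine tsum_congr fun i => ?_
  rw [ContinuousLinearMap.star_eq_adjoint, ContinuousLinearMap.adjoint_inner_right,
    norm_inner_symm]
  rfl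

lemma aux_inner_mul_star (T : H →L[ℂ] H) (x : H) :
    (⟪x, (T * star T) x⟫_ℂ).re = ‖(star T) x‖ ^ 2 := by
  rw [ContinuousLinearMap.mul_apply, ContinuousLinearMap.star_eq_adjoint,
    ← ContinuousLinearMap.adjoint_inner_left, inner_self_eq_norm_sq_to_K]
  norm_cast

lemma aux_inner_mono {A B : H →L[ℂ] H} (h : A ≤ B) (x : H) :
    (⟪x, A x⟫_ℂ).re ≤ (⟪x, B x⟫_ℂ).re := by
  have := (ContinuousLinearMap.le_def A B).1 h
  have h2 := this.re_inner_nonneg_right x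
  simp only [ContinuousLinearMap.sub_apply, inner_sub_right, map_sub] at h2
  simpa using h2

lemma aux_inner_nonneg {A : H →L[ℂ] H} (h : 0 ≤ A) (x : H) :
    0 ≤ (⟪x, A x⟫_ℂ).re := by
  simpa using aux_inner_mono h x

/-- `|a - e|` when `e` is a projection commuting with `0 ≤ a ≤ 1`. -/
lemma aux_abs {a e : H →L[ℂ] H} (ha0 : 0 ≤ a) (ha1 : 0 ≤ 1 - a)
    (he : IsOrthogonalProjection e) (hc : Commute e a) :
    0 ≤ a + e - 2 * (e * a) ∧ (a + e - 2 * (e * a)) * (a + e - 2 * (e * a)) = (a - e) * (a - e) ∧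
    CFC.sqrt (star (a - e) * (a - e)) = a + e - 2 * (e * a) := by
  obtain ⟨hs, hi⟩ := he
  have hc' : e * a = a * e := hc
  have k1 : ∀ z, e * (e * z) = e * z := fun z => by rw [← mul_assoc, hi]
  have k2 : ∀ z, a * (e * z) = e * (a * z) := fun z => by rw [← mul_assoc, ← hc', mul_assoc]
  have hpos : 0 ≤ a + e - 2 * (e * a) := by
    have h1 : 0 ≤ star (1 - e) * a * (1 - e) := star_left_conjugate_nonneg ha0 _
    have h2 : 0 ≤ star e * (1 - a) * e := star_left_conjugate_nonneg ha1 _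
    have h3 := add_nonneg h1 h2
    rw [star_sub, star_one, hs.star_eq] at h3
    convert h3 using 1
    simp only [mul_sub, sub_mul, mul_one, one_mul, mul_assoc, ← hc', k1, k2, hi, two_mul]
    abel
  have hsq : (a + e - 2 * (e * a)) * (a + e - 2 * (e * a)) = (a - e) * (a - e) := by
    simp only [mul_sub, sub_mul, mul_add, add_mul, mul_one, one_mul, mul_assoc, ← hc', k1, k2, hi,
      two_mul]
    abel
  refine ⟨hpos, hsq, ?_⟩
  have hsa : star (a - e) = a - e := by
    rw [star_sub, hs.star_eq, (IsSelfAdjoint.of_nonneg ha0).star_eq]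
  rw [hsa]
  exact CFC.sqrt_unique hsq hpos

/-- The spectral projection. -/
lemma aux_proj {a : H →L[ℂ] H} (ha : IsSelfAdjoint a) :
    ∃ e : H →L[ℂ] H, IsOrthogonalProjection e ∧ Commute e a ∧
      0 ≤ 1 - 2 * (a + e - 2 * (e * a)) := by
  set y : H →L[ℂ] H := a + a - 1 with hy
  have hys : IsSelfAdjoint y := (ha.add ha).sub (.one _)
  have huv : y⁺ - y⁻ = y := CFC.posPart_sub_negPart y hys
  have hu : 0 ≤ y⁺ := CFC.posPart_nonneg y
  have hv : 0 ≤ y⁻ := CFC.negPart_nonneg y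
  have hvu : y⁻ * y⁺ = 0 := CFC.negPart_mul_posPart y
  generalize y⁺ = u at *
  generalize y⁻ = v at *
  have hcl : IsClosed (v.ker : Set H) := v.isClosed_ker
  haveI : CompleteSpace v.ker := hcl.completeSpace_coe
  set e := v.ker.starProjection with he
  have hes : IsSelfAdjoint e := isSelfAdjoint_starProjection _
  have hei : e * e = e := Submodule.isIdempotentElem_starProjection _
  have hve : v * e = 0 := by
    ext z
    exact LinearMap.mem_ker.1 (Submodule.starProjection_apply_mem v.ker z)
  have hev : e * v = 0 := by
    have := congrArg star hve
    simpa [hes.star_eq, (IsSelfAdjoint.of_nonneg hv).star_eq] using this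
  have heu : e * u = u := by
    ext z
    have : u z ∈ v.ker := by
      have := congrArg (fun f : H →L[ℂ] H => f z) hvu
      simpa using this
    exact Submodule.starProjection_eq_self_iff.2 this
  have hue : u * e = u := by
    have := congrArg star heu
    simpa [hes.star_eq, (IsSelfAdjoint.of_nonneg hu).star_eq] using this
  have hey : e * y = u := by rw [← huv, mul_sub, heu, hev, sub_zero]
  have hye : y * e = u := by rw [← huv, sub_mul, hue, hve, sub_zero]
  have h1 : e * a + e * a = u + e := by
    rw [← hey, hy]; simp only [mul_sub, mul_add, mul_one]; abel
  have h2 : a * e + a * e = u + e := by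
    rw [← hye, hy]; simp only [sub_mul, add_mul, one_mul]; abel
  have hc : e * a = a * e := by
    have h3 : (2 : ℂ) • (e * a) = (2 : ℂ) • (a * e) := by
      rw [two_smul, two_smul, h1, h2]
    exact smul_right_injective _ (two_ne_zero) h3
  refine ⟨e, ⟨hes, hei⟩, hc, ?_⟩
  have h4 : 1 - 2 * (a + e - 2 * (e * a)) = u + v := by
    have h5 : v = u - (a + a - 1) := by rw [← hy, ← huv]; abel
    rw [two_mul (e * a), h1, h5, two_mul]
    abel
  rw [h4]
  exact add_nonneg hu hv

end Helpers

/-- Let `p`, `q` be orthogonal projections on a separable complex Hilbert space `H`.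
Then `q p (1 - q)` is Hilbert–Schmidt if and only if `q p q = e + t` for some
orthogonal projection `e` commuting with `q p q` and some trace-class operator `t`. -/
theorem hilbertSchmidt_iff_proj_add_traceClass
    {H : Type*} [NormedAddCommGroup H] [InnerProductSpace ℂ H] [CompleteSpace H]
    [TopologicalSpace.SeparableSpace H]
    (p q : H →L[ℂ] H) (hp : IsOrthogonalProjection p) (hq : IsOrthogonalProjection q) :
    IsHilbertSchmidt (q * p * (1 - q)) ↔
      ∃ e t : H →L[ℂ] H, IsOrthogonalProjection e ∧ Commute e (q * p * q) ∧
        IsTraceClass t ∧ q * p * q = e + t := by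
  set a := q * p * q with ha
  have hqs := hq.1.star_eq
  have hps := hp.1.star_eq
  have ha0 : 0 ≤ a := by
    have : a = star (p * q) * (p * q) := by
      rw [star_mul, hqs, hps, ha]
      simp only [mul_assoc]
      rw [← mul_assoc p p q, hp.2]
    rw [this]; exact star_mul_self_nonneg _
  have ha1 : 0 ≤ 1 - a := by
    have : 1 - a = star (1 - q) * (1 - q) + star ((1 - p) * q) * ((1 - p) * q) := by
      have k1 : ∀ z, q * (q * z) = q * z := fun z => by rw [← mul_assoc, hq.2]
      have k2 : ∀ z, p * (p * z) = p * z := fun z => by rw [← mul_assoc, hp.2]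
      rw [star_mul, star_sub, star_sub, star_one, hqs, hps, ha]
      simp only [mul_sub, sub_mul, mul_one, one_mul, mul_assoc, k1, k2, hq.2]
      abel
    rw [this]; exact add_nonneg (star_mul_self_nonneg _) (star_mul_self_nonneg _)
  have hTT : (q * p * (1 - q)) * star (q * p * (1 - q)) = a - a * a := by
    have k1 : ∀ z, q * (q * z) = q * z := fun z => by rw [← mul_assoc, hq.2]
    have k2 : ∀ z, p * (p * z) = p * z := fun z => by rw [← mul_assoc, hp.2]
    simp only [star_mul, star_sub, star_one, hqs, hps, ha]
    simp only [mul_sub, sub_mul, mul_one, one_mul, mul_assoc, k1, k2, hq.2]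
    abel
  generalize q * p * (1 - q) = T at *
  clear_value a
  have key : ∀ x, (⟪x, (a - a * a) x⟫_ℂ).re = ‖(star T) x‖ ^ 2 := fun x => by
    rw [← hTT, aux_inner_mul_star]
  constructor
  · rintro ⟨ι, b, hb⟩
    obtain ⟨e, he, hc, hw⟩ := aux_proj (IsSelfAdjoint.of_nonneg ha0)
    obtain ⟨hs0, hsq, hsqrt⟩ := aux_abs ha0 ha1 he hc
    refine ⟨e, a - e, he, hc, ⟨ι, b, ?_⟩, by abel⟩
    rw [hsqrt]
    have hc' : e * a = a * e := hc
    have hle : a + e - 2 * (e * a) ≤ (a - a * a) + (a - a * a) := by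
      have h1 : 0 ≤ (1 - 2 * (a + e - 2 * (e * a))) * (a + e - 2 * (e * a)) := by
        refine Commute.mul_nonneg hw hs0 ?_
        exact (Commute.one_left _).sub_left ((Commute.ofNat_left 2 _).mul_left (Commute.refl _))
      rw [← sub_nonneg]
      convert h1 using 1
      rw [sub_mul, mul_assoc (2 : H →L[ℂ] H), hsq]
      simp only [mul_sub, sub_mul, one_mul, hc', he.2, two_mul]
      abel
    refine Summable.of_nonneg_of_le (fun i => aux_inner_nonneg hs0 _)
      (fun i => aux_inner_mono hle _) ?_
    have h2 := aux_summable_star b T hb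
    refine (h2.add h2).congr fun i => ?_
    rw [ContinuousLinearMap.add_apply, inner_add_right, Complex.add_re, key]
  · rintro ⟨e, t, he, hc, ⟨ι, b, hb⟩, hat⟩
    obtain rfl : t = a - e := by rw [hat]; abel
    obtain ⟨hs0, hsq, hsqrt⟩ := aux_abs ha0 ha1 he hc
    rw [hsqrt] at hb
    have hc' : e * a = a * e := hc
    have hle : a - a * a ≤ a + e - 2 * (e * a) := by
      have h1 : 0 ≤ star (a - e) * (a - e) := star_mul_self_nonneg _
      rw [star_sub, he.1.star_eq, (IsSelfAdjoint.of_nonneg ha0).star_eq] at h1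
      rw [← sub_nonneg]
      convert h1 using 1
      simp only [mul_sub, sub_mul, hc', he.2, two_mul]
      abel
    refine ⟨ι, b, ?_⟩
    have h2 : Summable fun i => ‖(star T) (b i)‖ ^ 2 := by
      refine Summable.of_nonneg_of_le (fun i => by positivity) (fun i => ?_) hb
      rw [← key]
      exact aux_inner_mono hle _
    simpa using aux_summable_star b (star T) h2
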